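/- For every nonnegative integer n, odd positive integers a and b, real q with 0<q<1, real x, a positive integer r, and a Dirichlet character χ of odd conductor d: Σ_{j_1,...,j_r=0}^{da-1} (-1)^{j_1+⋯+j_r} q^{b(j_1+⋯+j_r)} (Π_{l=1}^r χ(j_l)) E^{(r)}_{n,χ,q^a}(bx + (b/a)(j_1+⋯+j_r)) = Σ_{i=0}^{n} C(n,i) ([b]_q/[a]_q)^{i} E^{(r)}_{n-i,χ,q^a}(bx) S^{(r)}_{n,i,q^b}(ad|χ), where C(n,i) is the binomial coefficient. -/

import Mathlib

open scoped BigOperators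

/-- The `q`-number `[x]_q = (1 - q^x)/(1 - q)` for real `q` and real `x`. -/
noncomputable def qNum (q x : ℝ) : ℝ := (1 - q ^ x) / (1 - q)

/-- Generalized `q`-Euler polynomial of order `r` attached to a Dirichlet character `χ`:
`E^{(r)}_{n,χ,q}(x) = [2]_q^r Σ' (-q)^{m₁+⋯+m_r} (Π χ(mᵢ)) [m₁+⋯+m_r+x]_q^n`. -/
noncomputable def qEuler (r : ℕ) {d : ℕ} (χ : DirichletCharacter ℂ d) (q : ℝ)
    (n : ℕ) (x : ℝ) : ℂ :=
  ((qNum q 2 : ℝ) : ℂ) ^ r *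
    ∑' m : Fin r → ℕ,
      ((-(q : ℂ)) ^ (∑ i, m i) * (∏ i, χ ((m i : ZMod d))) *
        ((qNum q ((∑ i, m i : ℕ) + x) : ℝ) : ℂ) ^ n)

/-- Dirichlet-type multiple `q`-`l`-function
`l_{q,r}(s,x|χ) = [2]_q^r Σ' (-q)^{m₁+⋯+m_r} (Π χ(mᵢ)) [m₁+⋯+m_r+x]_q^{-s}`,
with principal complex powers of positive real bases. -/
noncomputable def qL (q : ℝ) (r : ℕ) {d : ℕ} (χ : DirichletCharacter ℂ d)
    (s : ℂ) (x : ℝ) : ℂ :=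
  ((qNum q 2 : ℝ) : ℂ) ^ r *
    ∑' m : Fin r → ℕ,
      ((-(q : ℂ)) ^ (∑ i, m i) * (∏ i, χ ((m i : ZMod d))) *
        ((qNum q ((∑ i, m i : ℕ) + x) : ℝ) : ℂ) ^ (-s))

/-- The `q`-power sum
`S^{(r)}_{n,i,q}(a|χ) = Σ_{j₁,…,j_r=0}^{a-1} (-1)^{j₁+⋯+j_r} (Π χ(j_l)) q^{(j₁+⋯+j_r)(n-i+1)} [j₁+⋯+j_r]_q^i`. -/
noncomputable def qS (r : ℕ) {d : ℕ} (χ : DirichletCharacter ℂ d)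
    (n i : ℕ) (q : ℝ) (a : ℕ) : ℂ :=
  ∑ j ∈ Fintype.piFinset (fun _ : Fin r => Finset.range a),
    ((-1 : ℂ) ^ (∑ l, j l) * (∏ l, χ ((j l : ZMod d))) *
      (q : ℂ) ^ ((∑ l, j l) * (n - i + 1)) *
      ((qNum q ((∑ l, j l : ℕ)) : ℝ) : ℂ) ^ i)

/-!
Put `Q = q^a` and `c = b/a`, so that `Q^c = q^b` and `[c]_Q = [b]_q / [a]_q`. The addition law
`[u + v]_Q = [v]_Q + Q^v [u]_Q` and the binomial theorem, applied under the absolutely convergent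
series, expand `E^{(r)}_{n,χ,Q}(y + v)` in the `E^{(r)}_{n-i,χ,Q}(y)`. Taking `v = cJ` with
`J = j₁ + ⋯ + j_r`, the law `[cJ]_Q = [c]_Q [J]_{Q^c}` separates `c` from `J`, and the sum over
the `j_l` becomes a `q`-power sum for the base `Q^c`.
-/

section qNum

variable {q : ℝ}

lemma qNum_add (hq : 0 < q) (x y : ℝ) : qNum q (x + y) = qNum q y + q ^ y * qNum q x := by
  unfold qNum
  rw [Real.rpow_add hq]
  ring

lemma qNum_add_pow (hq : 0 < q) (n : ℕ) (x y : ℝ) :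
    qNum q (x + y) ^ n = ∑ i ∈ Finset.range (n + 1),
      n.choose i * qNum q y ^ i * (q ^ y) ^ (n - i) * qNum q x ^ (n - i) := by
  rw [qNum_add hq, add_pow]
  refine Finset.sum_congr rfl fun i _ => ?_
  rw [mul_pow]
  ring

lemma qNum_mul (hq : 0 ≤ q) (x y : ℝ) : qNum q (x * y) = qNum q x * qNum (q ^ x) y := by
  unfold qNum
  rw [Real.rpow_mul hq]
  by_cases hqx : q ^ x = 1
  · simp [hqx]
  · rw [mul_comm, div_mul_div_cancel₀ (sub_ne_zero.2 (Ne.symm hqx))]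

lemma qNum_pos (hq0 : 0 < q) (hq1 : q < 1) {x : ℝ} (hx : 0 < x) : 0 < qNum q x :=
  div_pos (sub_pos.2 (Real.rpow_lt_one hq0.le hq1 hx)) (sub_pos.2 hq1)

lemma qNum_rpow_div (hq0 : 0 < q) (hq1 : q < 1) {a : ℝ} (ha : 0 < a) (b : ℝ) :
    qNum (q ^ a) (b / a) = qNum q b / qNum q a := by
  rw [eq_div_iff (qNum_pos hq0 hq1 ha).ne', mul_comm, ← qNum_mul hq0.le, mul_div_cancel₀ b ha.ne']

lemma abs_qNum_le (hq0 : 0 < q) (hq1 : q < 1) {x y : ℝ} (hxy : x ≤ y) :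
    |qNum q y| ≤ (1 + q ^ x) / (1 - q) := by
  have hq : 0 < 1 - q := sub_pos.2 hq1
  unfold qNum
  rw [abs_div, abs_of_pos hq]
  gcongr
  calc |1 - q ^ y| ≤ |1| + |q ^ y| := abs_sub _ _
    _ = 1 + q ^ y := by rw [abs_one, abs_of_pos (Real.rpow_pos_of_pos hq0 y)]
    _ ≤ 1 + q ^ x := by gcongr 1 + ?_; exact Real.rpow_le_rpow_of_exponent_ge hq0 hq1.le hxy

end qNum

section Summability

lemma summable_prod_of_summable_of_nonneg {r : ℕ} {α : Fin r → Type*} {f : ∀ i, α i → ℝ}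
    (hf0 : ∀ i k, 0 ≤ f i k) (hf : ∀ i, Summable (f i)) :
    Summable fun m : ∀ i, α i => ∏ i, f i (m i) := by
  induction r with
  | zero => exact Summable.of_finite
  | succ r ih =>
    rw [← (Fin.consEquiv α).summable_iff]
    have htail := ih (fun i => hf0 i.succ) fun i => hf i.succ
    refine ((hf 0).mul_of_nonneg htail (hf0 0) fun m =>
      Finset.prod_nonneg fun i _ => hf0 i.succ (m i)).congr fun m => ?_
    simp [Fin.consEquiv, Fin.prod_univ_succ]

lemma summable_pow_sum {x : ℝ} (hx0 : 0 ≤ x) (hx1 : x < 1) (r : ℕ) :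
    Summable fun m : Fin r → ℕ => x ^ ∑ i, m i := by
  simp_rw [← Finset.prod_pow_eq_pow_sum]
  exact summable_prod_of_summable_of_nonneg (fun _ k => pow_nonneg hx0 k)
    fun _ => summable_geometric_of_lt_one hx0 hx1

end Summability

section qEuler

variable {r d : ℕ} (χ : DirichletCharacter ℂ d) {q : ℝ}

/-- The weight `(-q)^{m₁+⋯+m_r} Π χ(mᵢ)` with which `[m₁+⋯+m_r+x]_q^n` enters the series
`qEuler`. -/
noncomputable def qEulerWeight (q : ℝ) (m : Fin r → ℕ) : ℂ :=
  (-(q : ℂ)) ^ (∑ i, m i) * ∏ i, χ (m i : ZMod d)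

lemma qEuler_eq_tsum_qEulerWeight (r n : ℕ) (q x : ℝ) :
    qEuler r χ q n x = (qNum q 2 : ℂ) ^ r *
      ∑' m : Fin r → ℕ, qEulerWeight χ q m * (qNum q ((∑ i, m i : ℕ) + x) : ℂ) ^ n :=
  rfl

lemma norm_qEulerWeight_le (hq : 0 ≤ q) (m : Fin r → ℕ) :
    ‖qEulerWeight χ q m‖ ≤ q ^ ∑ i, m i := by
  have hχ : ‖∏ i, χ (m i : ZMod d)‖ ≤ 1 := by
    rw [norm_prod]
    exact Finset.prod_le_one (fun _ _ => norm_nonneg _) fun _ _ => χ.norm_le_one _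
  rw [qEulerWeight, norm_mul, norm_pow, norm_neg, Complex.norm_of_nonneg hq]
  exact mul_le_of_le_one_right (pow_nonneg hq _) hχ

lemma summable_qEulerWeight_mul_qNum_pow (hq0 : 0 < q) (hq1 : q < 1) (n : ℕ) (x : ℝ) :
    Summable fun m : Fin r → ℕ =>
      qEulerWeight χ q m * (qNum q ((∑ i, m i : ℕ) + x) : ℂ) ^ n := by
  refine Summable.of_norm_bounded
    ((summable_pow_sum hq0.le hq1 r).mul_right (((1 + q ^ x) / (1 - q)) ^ n)) fun m => ?_
  rw [norm_mul, norm_pow, Complex.norm_real, Real.norm_eq_abs]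
  gcongr
  · exact norm_qEulerWeight_le χ hq0.le m
  · exact abs_qNum_le hq0 hq1 (le_add_of_nonneg_left (Nat.cast_nonneg _))

theorem qEuler_add (hq0 : 0 < q) (hq1 : q < 1) (r n : ℕ) (x y : ℝ) :
    qEuler r χ q n (x + y) = ∑ i ∈ Finset.range (n + 1),
      n.choose i * (qNum q y : ℂ) ^ i * ((q ^ y : ℝ) : ℂ) ^ (n - i) * qEuler r χ q (n - i) x := by
  have hterm (m : Fin r → ℕ) :
      qEulerWeight χ q m * (qNum q ((∑ l, m l : ℕ) + (x + y)) : ℂ) ^ n =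
        ∑ i ∈ Finset.range (n + 1),
          n.choose i * (qNum q y : ℂ) ^ i * ((q ^ y : ℝ) : ℂ) ^ (n - i) *
            (qEulerWeight χ q m * (qNum q ((∑ l, m l : ℕ) + x) : ℂ) ^ (n - i)) := by
    rw [← add_assoc, ← Complex.ofReal_pow, qNum_add_pow hq0, Complex.ofReal_sum, Finset.mul_sum]
    refine Finset.sum_congr rfl fun i _ => ?_
    push_cast
    ring
  simp_rw [qEuler_eq_tsum_qEulerWeight, hterm]
  rw [Summable.tsum_finsetSum fun i _ =>
    (summable_qEulerWeight_mul_qNum_pow χ hq0 hq1 (n - i) x).mul_left _, Finset.mul_sum]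
  refine Finset.sum_congr rfl fun i _ => ?_
  rw [tsum_mul_left]
  ring

theorem sum_qEuler_eq_qS_general {e : ℕ} (ψ : DirichletCharacter ℂ e) (hq0 : 0 < q) (hq1 : q < 1)
    (r s n N : ℕ) (x c : ℝ) :
    ∑ j ∈ Fintype.piFinset (fun _ : Fin s => Finset.range N),
        ((-1 : ℂ) ^ (∑ l, j l) * ((q ^ c : ℝ) : ℂ) ^ (∑ l, j l) * (∏ l, ψ (j l : ZMod e)) *
          qEuler r χ q n (x + c * (∑ l, j l))) =
      ∑ i ∈ Finset.range (n + 1),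
        (n.choose i * (qNum q c : ℂ) ^ i * qEuler r χ q (n - i) x * qS s ψ n i (q ^ c) N) := by
  simp_rw [qEuler_add χ hq0 hq1, qS, Finset.mul_sum]
  rw [Finset.sum_comm]
  refine Finset.sum_congr rfl fun i _ => Finset.sum_congr rfl fun j _ => ?_
  rw [qNum_mul hq0.le, Real.rpow_mul hq0.le, Real.rpow_natCast]
  push_cast
  ring

end qEuler

/-- Equation (10): the multiple alternating sum of generalized `q`-Euler polynomials
expressed via `q`-power sums. -/
theorem sum_qEuler_eq_qS (n : ℕ) (a b : ℕ) (ha0 : 0 < a) (ha : Odd a) (hb0 : 0 < b)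
    (hb : Odd b) (q : ℝ) (hq0 : 0 < q) (hq1 : q < 1) (x : ℝ)
    (r : ℕ) (hr : 0 < r) (d : ℕ) (hd : Odd d) (χ : DirichletCharacter ℂ d) :
    ∑ j ∈ Fintype.piFinset (fun _ : Fin r => Finset.range (d * a)),
        ((-1 : ℂ) ^ (∑ l, j l) * (q : ℂ) ^ (b * ∑ l, j l) * (∏ l, χ ((j l : ZMod d))) *
          qEuler r χ (q ^ a) n (b * x + ((b : ℝ) / a) * (∑ l, j l))) =
      ∑ i ∈ Finset.range (n + 1),
        ((n.choose i : ℂ) * (((qNum q b / qNum q a : ℝ)) : ℂ) ^ i *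
          qEuler r χ (q ^ a) (n - i) (b * x) * qS r χ n i (q ^ b) (a * d)) := by
  have ha' : (0 : ℝ) < a := Nat.cast_pos.2 ha0
  have h := sum_qEuler_eq_qS_general χ χ (Real.rpow_pos_of_pos hq0 a)
    (Real.rpow_lt_one hq0.le hq1 ha') r r n (d * a) (b * x) (b / a)
  rw [qNum_rpow_div hq0 hq1 ha', ← Real.rpow_mul hq0.le, mul_div_cancel₀ _ ha'.ne'] at h
  simpa only [Real.rpow_natCast, Complex.ofReal_pow, ← pow_mul, mul_comm d a] using h
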